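/- Let d ≥ 3 and Q = [0, h]^d ⊂ ℝ^d a cube of side length h, with center x_Q. Let x₁ ∈ ℝ^d with dist(x₁, Q) ≥ h. Then |∫_Q ‖x₁ - y‖^{2-d} dy − h^d ‖x₁ − x_Q‖^{2-d}| ≤ C_d · h^{d+2} · dist(x₁, Q)^{-d}, i.e. the midpoint rule for the Coulomb kernel over a cube has error of second order, with the linear term cancelling by symmetry. -/

import Mathlib

open Real MeasureTheory Metric

/-!
Let `f` be a `C²` function near a convex body `K` which is symmetric about `c`. By Taylor's formula
`f y = f c + f' c (y - c) + O(‖y - c‖²)` on `K`, and the linear term is odd under the point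
reflection about `c`, so that it disappears after integration over `K`. For `f = ‖x - ·‖ ^ s` with
`s ≤ 2`, the second derivative is at most `|s| (1 + |s - 2|) ‖x - ·‖ ^ (s - 2)`, whose supremum
over `K` is attained at the point nearest to `x`.
-/

section Taylor

variable {E F : Type*} [NormedAddCommGroup E] [NormedSpace ℝ E]
  [NormedAddCommGroup F] [NormedSpace ℝ F]

lemma norm_sub_sub_fderiv_le_of_lipschitz {f : E → F} {f' : E → E →L[ℝ] F} {S : Set E} {a b : E}
    {M : ℝ} (hS : Convex ℝ S) (hf : ∀ z ∈ S, HasFDerivWithinAt f (f' z) S z)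
    (hM : 0 ≤ M) (hf' : ∀ z ∈ S, ‖f' z - f' a‖ ≤ M * ‖z - a‖) (ha : a ∈ S) (hb : b ∈ S) :
    ‖f b - f a - f' a (b - a)‖ ≤ M * ‖b - a‖ ^ 2 := by
  have hseg : segment ℝ a b ⊆ S := hS.segment_subset ha hb
  have hbound : ∀ z ∈ segment ℝ a b, ‖f' z - f' a‖ ≤ M * ‖b - a‖ := fun z hz ↦
    (hf' z (hseg hz)).trans
      (mul_le_mul_of_nonneg_left (norm_sub_le_of_mem_segment hz) hM)
  calc ‖f b - f a - f' a (b - a)‖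
      ≤ M * ‖b - a‖ * ‖b - a‖ :=
        (convex_segment a b).norm_image_sub_le_of_norm_hasFDerivWithin_le'
          (fun z hz ↦ (hf z (hseg hz)).mono hseg) hbound
          (left_mem_segment ℝ a b) (right_mem_segment ℝ a b)
    _ = M * ‖b - a‖ ^ 2 := by ring

end Taylor

section NormRpow

variable {E : Type*} [NormedAddCommGroup E] [InnerProductSpace ℝ E]

lemma hasFDerivAt_norm_rpow_of_ne_zero (s : ℝ) {x : E} (hx : x ≠ 0) :
    HasFDerivAt (fun y : E ↦ ‖y‖ ^ s) (s • innerSL ℝ (‖x‖ ^ (s - 2) • x)) x := by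
  have hsq (t : ℝ) (y : E) : (‖y‖ ^ 2) ^ t = ‖y‖ ^ (2 * t) := by
    rw [← rpow_natCast_mul (norm_nonneg y), Nat.cast_two]
  have hderiv := (hasStrictFDerivAt_norm_sq x).hasFDerivAt.rpow_const (p := s / 2)
    (.inl (pow_ne_zero 2 (norm_ne_zero_iff.2 hx)))
  simp only [hsq, mul_sub, mul_div_cancel₀ s two_ne_zero, mul_one] at hderiv
  convert hderiv using 1
  ext v
  simp only [map_smul, smul_apply, smul_eq_mul, nsmul_eq_mul]
  push_cast
  ring

lemma norm_rpow_smul_sub_le {S : Set E} {m q : ℝ} (hS : Convex ℝ S) (hm : 0 < m)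
    (hmS : ∀ z ∈ S, m ≤ ‖z‖) (hq : q ≤ 0) {a b : E} (ha : a ∈ S) (hb : b ∈ S) :
    ‖‖b‖ ^ q • b - ‖a‖ ^ q • a‖ ≤ (1 + |q|) * m ^ q * ‖b - a‖ := by
  have hne (z) (hz : z ∈ S) : z ≠ 0 := norm_pos_iff.1 (hm.trans_le (hmS z hz))
  refine hS.norm_image_sub_le_of_norm_hasFDerivWithin_le (fun z hz ↦
    ((hasFDerivAt_norm_rpow_of_ne_zero q (hne z hz)).smul
      (hasFDerivAt_id z)).hasFDerivWithinAt) (fun z hz ↦ ?_) ha hb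
  have hz0 : 0 < ‖z‖ := norm_pos_iff.2 (hne z hz)
  have hlin : ‖‖z‖ ^ q • ContinuousLinearMap.id ℝ E‖ ≤ ‖z‖ ^ q := by
    rw [norm_smul, norm_of_nonneg (by positivity)]
    exact mul_le_of_le_one_right (by positivity) ContinuousLinearMap.norm_id_le
  have hrank : ‖(q • innerSL ℝ (‖z‖ ^ (q - 2) • z)).smulRight z‖ = |q| * ‖z‖ ^ q := by
    rw [ContinuousLinearMap.norm_smulRight_apply, norm_smul, innerSL_apply_norm, norm_smul,
      norm_of_nonneg (by positivity : 0 ≤ ‖z‖ ^ (q - 2)), norm_eq_abs, mul_assoc, mul_assoc,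
      ← sq, ← rpow_two, ← rpow_add hz0, sub_add_cancel]
  calc _ ≤ ‖z‖ ^ q + |q| * ‖z‖ ^ q := (norm_add_le _ _).trans (add_le_add hlin hrank.le)
    _ = (1 + |q|) * ‖z‖ ^ q := by ring
    _ ≤ (1 + |q|) * m ^ q := by
      exact mul_le_mul_of_nonneg_left (rpow_le_rpow_of_nonpos hm (hmS z hz) hq) (by positivity)

lemma abs_norm_rpow_sub_sub_fderiv_le {S : Set E} {m s : ℝ} (hS : Convex ℝ S) (hm : 0 < m)
    (hmS : ∀ z ∈ S, m ≤ ‖z‖) (hs : s ≤ 2) {a b : E} (ha : a ∈ S) (hb : b ∈ S) :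
    |‖b‖ ^ s - ‖a‖ ^ s - (s • innerSL ℝ (‖a‖ ^ (s - 2) • a)) (b - a)|
      ≤ |s| * (1 + |s - 2|) * m ^ (s - 2) * ‖b - a‖ ^ 2 := by
  refine norm_sub_sub_fderiv_le_of_lipschitz (f' := fun z ↦ s • innerSL ℝ (‖z‖ ^ (s - 2) • z)) hS
    (fun z hz ↦ (hasFDerivAt_norm_rpow_of_ne_zero s
      (norm_pos_iff.1 (hm.trans_le (hmS z hz)))).hasFDerivWithinAt)
    (by positivity) (fun z hz ↦ ?_) ha hb
  rw [← smul_sub, ← map_sub, norm_smul, innerSL_apply_norm, norm_eq_abs, mul_assoc |s|,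
    mul_assoc |s|]
  exact mul_le_mul_of_nonneg_left
    (norm_rpow_smul_sub_le hS hm hmS (sub_nonpos.2 hs) ha hz) (abs_nonneg s)

end NormRpow

section Symmetric

variable {E F : Type*} [NormedAddCommGroup E] [MeasurableSpace E] [BorelSpace E]
  [NormedAddCommGroup F] [NormedSpace ℝ F] {μ : Measure E} {K : Set E} {c : E}

lemma setIntegral_eq_zero_of_pointReflection_eq_neg [μ.IsAddLeftInvariant] [μ.IsNegInvariant]
    (hK : Set.MapsTo (Equiv.pointReflection c) K K) {f : E → F}
    (hf : ∀ y, f (Equiv.pointReflection c y) = -f y) : ∫ y in K, f y ∂μ = 0 := by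
  have hrefl : ⇑(Equiv.pointReflection c) = fun y ↦ c + c - y := by
    ext y
    simp only [Equiv.pointReflection_apply, vsub_eq_sub, vadd_eq_add]
    abel
  have hpre : Equiv.pointReflection c ⁻¹' K = K :=
    Set.Subset.antisymm
      (fun y hy ↦ by simpa only [Equiv.pointReflection_involutive c y] using hK hy) hK
  have hemb : MeasurableEmbedding (Equiv.pointReflection c) :=
    hrefl ▸ (MeasurableEquiv.subLeft (c + c)).measurableEmbedding
  have hpres : MeasurePreserving (Equiv.pointReflection c) μ μ :=
    hrefl ▸ μ.measurePreserving_sub_left (c + c)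
  have hint := hpres.setIntegral_preimage_emb hemb f K
  simp only [hpre, hf, integral_neg] at hint
  have : IsAddTorsionFree F := .of_isTorsionFree ℝ F
  exact self_eq_neg.1 hint.symm

lemma norm_setIntegral_sub_smul_center_le [NormedSpace ℝ E] [CompleteSpace F]
    [μ.IsAddLeftInvariant] [μ.IsNegInvariant] [IsFiniteMeasureOnCompacts μ] (hK : IsCompact K)
    (hsymm : Set.MapsTo (Equiv.pointReflection c) K K) {f : E → F} (hf : ContinuousOn f K)
    (L : E →L[ℝ] F) {B : ℝ} (hB : ∀ y ∈ K, ‖f y - f c - L (y - c)‖ ≤ B) :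
    ‖∫ y in K, f y ∂μ - μ.real K • f c‖ ≤ B * μ.real K := by
  have hlin : ∫ y in K, L (y - c) ∂μ = 0 :=
    setIntegral_eq_zero_of_pointReflection_eq_neg hsymm fun y ↦ by
      rw [← map_neg, Equiv.pointReflection_apply, vadd_eq_add, vsub_eq_sub, add_sub_cancel_right,
        neg_sub]
  have hconst : IntegrableOn (fun _ ↦ f c) K μ := continuousOn_const.integrableOn_compact hK
  have hfint : IntegrableOn f K μ := hf.integrableOn_compact hK
  have hLint : IntegrableOn (fun y ↦ L (y - c)) K μ :=
    (by fun_prop : Continuous fun y ↦ L (y - c)).continuousOn.integrableOn_compact hK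
  have herror : ∫ y in K, (f y - f c - L (y - c)) ∂μ = ∫ y in K, f y ∂μ - μ.real K • f c := by
    rw [integral_sub (f := fun y ↦ f y - f c) (hfint.sub hconst) hLint,
      integral_sub hfint hconst, hlin, sub_zero, setIntegral_const]
  exact herror ▸ norm_setIntegral_le_of_norm_le_const hK.measure_lt_top hB

end Symmetric

lemma abs_setIntegral_norm_sub_rpow_sub_center_le {E : Type*} [NormedAddCommGroup E]
    [InnerProductSpace ℝ E] [MeasurableSpace E] [BorelSpace E] {μ : Measure E}
    [μ.IsAddLeftInvariant] [μ.IsNegInvariant] [IsFiniteMeasureOnCompacts μ] {K : Set E} {c x : E}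
    {r s : ℝ} (hconv : Convex ℝ K) (hcomp : IsCompact K)
    (hsymm : Set.MapsTo (Equiv.pointReflection c) K K) (hr : K ⊆ closedBall c r) (hs : s ≤ 2)
    (hx : 0 < infDist x K) :
    |∫ y in K, ‖x - y‖ ^ s ∂μ - μ.real K * ‖x - c‖ ^ s|
      ≤ |s| * (1 + |s - 2|) * infDist x K ^ (s - 2) * r ^ 2 * μ.real K := by
  obtain ⟨y₀, hy₀⟩ : K.Nonempty := by
    by_contra! hempty
    simp only [hempty, infDist_empty, lt_self_iff_false] at hx
  have hc : c ∈ K := by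
    simpa only [midpoint_pointReflection_left] using hconv.midpoint_mem (hsymm hy₀) hy₀
  have hfar : ∀ y ∈ K, infDist x K ≤ ‖y - x‖ := fun y hy ↦ by
    simpa only [dist_eq_norm'] using infDist_le_dist_of_mem (x := x) hy
  have hcont : ContinuousOn (fun y ↦ ‖y - x‖ ^ s) K :=
    (by fun_prop : Continuous fun y ↦ ‖y - x‖).continuousOn.rpow_const
      fun y hy ↦ .inl (hx.trans_le (hfar y hy)).ne'
  simp only [norm_sub_rev x]
  refine norm_setIntegral_sub_smul_center_le hcomp hsymm hcont
    (s • innerSL ℝ (‖c - x‖ ^ (s - 2) • (c - x))) fun y hy ↦ ?_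
  have htaylor := abs_norm_rpow_sub_sub_fderiv_le (a := c - x) (b := y - x)
    (hconv.translate_preimage_right x) hx
    (fun z hz ↦ by simpa only [add_sub_cancel_left] using hfar (x + z) hz) hs
    (by simpa only [Set.mem_preimage, add_sub_cancel] using hc)
    (by simpa only [Set.mem_preimage, add_sub_cancel] using hy)
  rw [sub_sub_sub_cancel_right] at htaylor
  refine htaylor.trans (mul_le_mul_of_nonneg_left ?_ (by positivity))
  exact pow_le_pow_left₀ (norm_nonneg _) (mem_closedBall_iff_norm.1 (hr hy)) 2

section Box

variable {ι : Type*}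

/-- The coordinate box `∏ i, [a i, b i]`, as a subset of Euclidean space. -/
def box (a b : EuclideanSpace ℝ ι) : Set (EuclideanSpace ℝ ι) :=
  {y | ∀ i, y i ∈ Set.Icc (a i) (b i)}

lemma box_eq_preimage_Icc (a b : EuclideanSpace ℝ ι) :
    box a b = WithLp.ofLp ⁻¹' Set.Icc a.ofLp b.ofLp :=
  Set.ext fun _ ↦ forall_and

lemma convex_box (a b : EuclideanSpace ℝ ι) : Convex ℝ (box a b) := by
  rw [box_eq_preimage_Icc]
  exact (convex_Icc a.ofLp b.ofLp).linear_preimage (WithLp.linearEquiv 2 ℝ (ι → ℝ)).toLinearMap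

lemma isCompact_box (a b : EuclideanSpace ℝ ι) : IsCompact (box a b) := by
  rw [box_eq_preimage_Icc]
  exact (PiLp.homeomorph 2 _).isCompact_preimage.2 isCompact_Icc

lemma midpoint_euclidean_apply (a b : EuclideanSpace ℝ ι) (i : ι) :
    midpoint ℝ a b i = (a i + b i) / 2 := by
  simp only [midpoint_eq_smul_add, PiLp.smul_apply, PiLp.add_apply, smul_eq_mul, invOf_eq_inv]
  ring

lemma mapsTo_pointReflection_midpoint_box (a b : EuclideanSpace ℝ ι) :
    Set.MapsTo (Equiv.pointReflection (midpoint ℝ a b)) (box a b) (box a b) := by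
  intro y hy i
  obtain ⟨hay, hyb⟩ := hy i
  simp only [Equiv.pointReflection_apply, vsub_eq_sub, vadd_eq_add, PiLp.add_apply,
    PiLp.sub_apply, midpoint_euclidean_apply]
  constructor <;> linarith

variable [Fintype ι] {a b : EuclideanSpace ℝ ι}

lemma volume_real_box (hab : ∀ i, a i ≤ b i) : volume.real (box a b) = ∏ i, (b i - a i) := by
  rw [box_eq_preimage_Icc, Measure.real, (PiLp.volume_preserving_ofLp ι).measure_preimage
    measurableSet_Icc.nullMeasurableSet, Real.volume_Icc_pi_toReal hab]

lemma box_subset_closedBall_midpoint (a b : EuclideanSpace ℝ ι) :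
    box a b ⊆ closedBall (midpoint ℝ a b) (‖b - a‖ / 2) := by
  intro y hy
  have hcoord (i) : ‖(y - midpoint ℝ a b) i‖ ≤ ‖((1 / 2 : ℝ) • (b - a)) i‖ := by
    obtain ⟨hay, hyb⟩ := hy i
    simp only [PiLp.sub_apply, PiLp.smul_apply, midpoint_euclidean_apply, norm_eq_abs, smul_eq_mul]
    refine abs_le_abs ?_ ?_ <;> linarith
  calc dist y (midpoint ℝ a b) = ‖y - midpoint ℝ a b‖ := dist_eq_norm _ _
    _ ≤ ‖(1 / 2 : ℝ) • (b - a)‖ := by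
      rw [EuclideanSpace.norm_eq, EuclideanSpace.norm_eq]
      gcongr with i
      exact hcoord i
    _ = ‖b - a‖ / 2 := by rw [norm_smul, norm_of_nonneg (by norm_num)]; ring

lemma abs_setIntegral_box_norm_sub_rpow_sub_midpoint_le {x : EuclideanSpace ℝ ι} {s : ℝ}
    (hab : ∀ i, a i ≤ b i) (hs : s ≤ 2) (hx : 0 < infDist x (box a b)) :
    |(∫ y in box a b, ‖x - y‖ ^ s) - (∏ i, (b i - a i)) * ‖x - midpoint ℝ a b‖ ^ s|
      ≤ |s| * (1 + |s - 2|) * infDist x (box a b) ^ (s - 2) * (‖b - a‖ / 2) ^ 2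
        * ∏ i, (b i - a i) := by
  rw [← volume_real_box hab]
  exact abs_setIntegral_norm_sub_rpow_sub_center_le (convex_box a b) (isCompact_box a b)
    (mapsTo_pointReflection_midpoint_box a b) (box_subset_closedBall_midpoint a b) hs hx

end Box

theorem stmt12_general (d : ℕ) {s : ℝ} (hs : s ≤ 2) :
    ∃ C : ℝ, 0 < C ∧ ∀ h : ℝ, 0 < h →
      ∀ Q : Set (EuclideanSpace ℝ (Fin d)), Q = {y | ∀ i, y i ∈ Set.Icc 0 h} →
      ∀ xQ : EuclideanSpace ℝ (Fin d), (∀ i, xQ i = h / 2) →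
      ∀ x₁ : EuclideanSpace ℝ (Fin d), 0 < Metric.infDist x₁ Q →
      |(∫ y in Q, ‖x₁ - y‖ ^ s) - h ^ d * ‖x₁ - xQ‖ ^ s|
        ≤ C * h ^ (d + 2) * Metric.infDist x₁ Q ^ (s - 2) := by
  refine ⟨|s| * (1 + |s - 2|) * d / 4 + 1, by positivity, ?_⟩
  intro h hh Q hQ xQ hxQ x₁ hdist
  let b : EuclideanSpace ℝ (Fin d) := WithLp.toLp 2 fun _ ↦ h
  have hbox : Q = box 0 b := hQ
  have hmid : xQ = midpoint ℝ 0 b := PiLp.ext fun i ↦ by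
    rw [hxQ, midpoint_euclidean_apply, PiLp.zero_apply, zero_add]
  have hvol : ∏ i, (b i - (0 : EuclideanSpace ℝ (Fin d)) i) = h ^ d := by simp [b]
  have hdiam : ‖b - 0‖ ^ 2 = d * h ^ 2 := by simp [b, EuclideanSpace.norm_sq_eq]
  have hmidpoint := abs_setIntegral_box_norm_sub_rpow_sub_midpoint_le (a := 0) (b := b)
    (fun _ ↦ hh.le) hs (hbox ▸ hdist)
  rw [hvol, div_pow, hdiam, ← hbox, ← hmid] at hmidpoint
  calc _ ≤ _ := hmidpoint
    _ = |s| * (1 + |s - 2|) * d / 4 * h ^ (d + 2) * infDist x₁ Q ^ (s - 2) := by ring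
    _ ≤ _ := by gcongr; exact le_add_of_nonneg_right zero_le_one

/-- Midpoint rule for the Coulomb kernel over a cube: for `d ≥ 3`, `Q = [0,h]^d` with
center `x_Q`, and `x₁` at distance at least `h` from `Q`,
`|∫_Q ‖x₁ - y‖^{2-d} dy − h^d ‖x₁ − x_Q‖^{2-d}| ≤ C_d h^{d+2} dist(x₁,Q)^{-d}`. -/
theorem stmt12 (d : ℕ) (hd : 3 ≤ d) :
    ∃ C : ℝ, 0 < C ∧ ∀ h : ℝ, 0 < h →
      ∀ Q : Set (EuclideanSpace ℝ (Fin d)), Q = {y | ∀ i, y i ∈ Set.Icc 0 h} →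
      ∀ xQ : EuclideanSpace ℝ (Fin d), (∀ i, xQ i = h / 2) →
      ∀ x₁ : EuclideanSpace ℝ (Fin d), h ≤ Metric.infDist x₁ Q →
      |(∫ y in Q, ‖x₁ - y‖ ^ ((2 : ℝ) - d)) - h ^ d * ‖x₁ - xQ‖ ^ ((2 : ℝ) - d)|
        ≤ C * h ^ (d + 2) * Metric.infDist x₁ Q ^ (-(d : ℝ)) := by
  obtain ⟨C, hC, hmidpoint⟩ := stmt12_general d (sub_le_self (2 : ℝ) d.cast_nonneg)
  exact ⟨C, hC, fun h hh Q hQ xQ hxQ x₁ hdist ↦ by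
    simpa only [sub_sub_cancel_left] using hmidpoint h hh Q hQ xQ hxQ x₁ (hh.trans_le hdist)⟩
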